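/- Fix 1 ≤ p < ∞ and let w be the weight given by w_n = ((n+1)/n)² for n ≥ 1. Then the weighted backward shift B_w on ℓ^p(ℕ) is frequently hypercyclic, and for every λ > 1 the operator λB_w is frequently hypercyclic, but FHC(B_w) ∩ FHC(λB_w) = ∅. In particular, there exist two frequently hypercyclic weighted shifts on ℓ^p(ℕ) with no common frequently hypercyclic vector. -/

import Mathlib

open Filter Topology
open scoped ENNReal NNReal

/-- Lower density of a set of natural numbers. -/
noncomputable def lowerDensity (E : Set ℕ) : ℝ :=
  Filter.liminf (fun n : ℕ =>
    (∑ k ∈ Finset.range (n + 1), Set.indicator E (fun _ => (1 : ℝ)) k) / ((n : ℝ) + 1))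
    Filter.atTop

/-- The set of frequently hypercyclic vectors of an operator. -/
noncomputable def FHC {X : Type*} [NormedAddCommGroup X] [NormedSpace ℂ X]
    (T : X →L[ℂ] X) : Set X :=
  {x | ∀ U : Set X, IsOpen U → U.Nonempty → 0 < lowerDensity {n : ℕ | (T ^ n) x ∈ U}}

/-!
Write `P n = w 1 ⋯ w n`; for the weights of the theorem `P n = (n + 1)²`.

*Frequent hypercyclicity.* The vectors `e_k / P k`, placed at time `-k`, form a bilateral orbit of
`B_w` that is summable because `1 / P ∈ ℓ^p`, so a dense set of vectors lies on summable orbits. If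
`u j : ℤ → X` are such orbits of an operator `T`, choose sets `A j ⊆ ℕ` of positive lower density,
the points of `A j` and of `A k` being more than `N j + N k` apart, and put
`x = ∑ k, ∑ a ∈ A k, u k (-a)`. For `m ∈ A j` the vector `T ^ m x` is `u j 0` plus the values
`u k (m - a)` with `|m - a|` large, whose sum is small. Such sets `A j` come from consecutive
intervals of radii `v₂(t + 1) + 1`: a given radius recurs periodically in `t`, and by Legendre's
formula the centres grow linearly. For `|λ| > 1` the weights of `λ B_w` have even larger products.

*Disjointness.* Let `x` be frequently hypercyclic for both `B = B_w` and `λ B`. Then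
`|λ|ⁿ ‖Bⁿ x‖ < 1` for infinitely many `n`. The set of `m` with `|(Bᵐ x)₀| > 1` has positive lower
density, hence contains some `n + k` with `k ≤ C n` for each large `n`, where `C` is fixed. But
`|(Bⁿ⁺ᵏ x)₀| ≤ |P k| ‖Bⁿ x‖`, and `|P k| < |λ|ⁿ` for `k ≤ C n` since `P` grows subexponentially.
-/

section LowerDensity

variable {E F : Set ℕ}

lemma sum_range_indicator_one_eq_count (E : Set ℕ) [DecidablePred (· ∈ E)] (n : ℕ) :
    ∑ k ∈ Finset.range n, E.indicator (fun _ => (1 : ℝ)) k = Nat.count (· ∈ E) n := by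
  simp [Nat.count_eq_card_filter_range, Set.indicator_apply]

lemma lowerDensity_pos_iff [DecidablePred (· ∈ E)] :
    0 < lowerDensity E ↔
      ∃ c : ℝ, 0 < c ∧ ∀ᶠ n : ℕ in atTop, c * n ≤ Nat.count (· ∈ E) n := by
  have hshift (c : ℝ) : (∀ᶠ n : ℕ in atTop, c * n ≤ Nat.count (· ∈ E) n) ↔
      ∀ᶠ n : ℕ in atTop, c ≤ Nat.count (· ∈ E) (n + 1) / ((n : ℝ) + 1) := by
    conv_lhs => rw [← map_add_atTop_eq_nat 1, eventually_map]
    simp only [le_div_iff₀ (Nat.cast_add_one_pos (α := ℝ) _), Nat.cast_add_one]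
  simp only [lowerDensity, sum_range_indicator_one_eq_count, hshift]
  have hbdd : IsBoundedUnder (· ≥ ·) atTop fun n : ℕ =>
      (Nat.count (· ∈ E) (n + 1) : ℝ) / (n + 1) :=
    isBoundedUnder_of ⟨0, fun n => by positivity⟩
  have hcobdd : IsCoboundedUnder (· ≥ ·) atTop fun n : ℕ =>
      (Nat.count (· ∈ E) (n + 1) : ℝ) / (n + 1) := by
    refine (isBoundedUnder_of ⟨1, fun n => ?_⟩).isCoboundedUnder_ge
    exact div_le_one_of_le₀ (mod_cast Nat.count_le (p := (· ∈ E)) (n := n + 1)) (by positivity)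
  constructor
  · intro h
    obtain ⟨c, hc, hcE⟩ := exists_between h
    exact ⟨c, hc, (eventually_lt_of_lt_liminf hcE hbdd).mono fun _ => le_of_lt⟩
  · rintro ⟨c, hc, hcE⟩
    exact hc.trans_le (le_liminf_of_le hcobdd hcE)

lemma lowerDensity_pos_mono (h : E ⊆ F) (hE : 0 < lowerDensity E) : 0 < lowerDensity F := by
  classical
  obtain ⟨c, hc, hcE⟩ := lowerDensity_pos_iff.1 hE
  refine lowerDensity_pos_iff.2 ⟨c, hc, hcE.mono fun n hn => hn.trans ?_⟩
  exact_mod_cast Nat.count_mono_left fun k _ hk => h hk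

lemma lowerDensity_pos_of_injective {β : ℕ → ℕ} (hβ : Function.Injective β) (hE : ∀ q, β q ∈ E)
    {D : ℕ} (hD : ∀ q, β q < D * (q + 1)) : 0 < lowerDensity E := by
  classical
  have hD0 : 0 < D := Nat.pos_of_mul_pos_right ((Nat.zero_le _).trans_lt (hD 0))
  refine lowerDensity_pos_iff.2 ⟨1 / (2 * D), by positivity, ?_⟩
  filter_upwards [eventually_ge_atTop D] with n hn
  have hcount : n / D ≤ Nat.count (· ∈ E) n := by
    rw [Nat.count_eq_card_filter_range, ← Finset.card_range (n / D),
      ← Finset.card_image_of_injective _ hβ]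
    refine Finset.card_le_card (Finset.image_subset_iff.2 fun q hq => ?_)
    have hq' : D * (q + 1) ≤ n :=
      (Nat.mul_le_mul_left D (Finset.mem_range.1 hq)).trans (Nat.mul_div_le n D)
    simpa [hE q] using (hD q).trans_le hq'
  have hdiv : n ≤ 2 * D * (n / D) := by
    have h1 : 1 ≤ n / D := (Nat.one_le_div_iff hD0).2 hn
    have h2 := Nat.lt_mul_div_succ n hD0
    nlinarith
  rw [one_div_mul_eq_div, div_le_iff₀' (by positivity)]
  exact_mod_cast hdiv.trans (Nat.mul_le_mul_left _ hcount)

lemma exists_forall_eventually_exists_mem_of_lowerDensity_pos (hE : 0 < lowerDensity E) :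
    ∃ C : ℕ, ∀ᶠ n : ℕ in atTop, ∃ k ≤ C * n, n + k ∈ E := by
  classical
  obtain ⟨c, hc, hcE⟩ := lowerDensity_pos_iff.1 hE
  obtain ⟨C, hC⟩ := exists_nat_gt (1 / c)
  rw [div_lt_iff₀' hc] at hC
  have hC0 : 0 < C := by
    refine Nat.pos_of_ne_zero ?_
    rintro rfl
    norm_num at hC
  have htop : Tendsto (fun n => C * n) atTop atTop := tendsto_id.const_mul_atTop' hC0
  refine ⟨C, ?_⟩
  filter_upwards [htop.eventually hcE, eventually_gt_atTop 0] with n hn hn0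
  by_contra! hempty
  have hcount : Nat.count (· ∈ E) (C * n) ≤ n := by
    rw [Nat.count_eq_card_filter_range]
    refine (Finset.card_le_card fun m hm => ?_).trans (Finset.card_range n).le
    obtain ⟨hm, hmE⟩ := Finset.mem_filter.1 hm
    rw [Finset.mem_range] at hm ⊢
    by_contra! hnm
    exact hempty (m - n) (by omega) (by rwa [Nat.add_sub_cancel' hnm])
  have hn0' : (0 : ℝ) < n := mod_cast hn0
  have hle : c * (C * n : ℕ) ≤ n := hn.trans (mod_cast hcount)
  push_cast at hle
  nlinarith

lemma frequently_mem_of_lowerDensity_pos (hE : 0 < lowerDensity E) : ∃ᶠ n in atTop, n ∈ E := by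
  obtain ⟨C, hC⟩ := exists_forall_eventually_exists_mem_of_lowerDensity_pos hE
  rw [frequently_atTop]
  intro a
  obtain ⟨n, han, k, -, hk⟩ := ((eventually_ge_atTop a).and hC).exists
  exact ⟨n + k, han.trans (Nat.le_add_right n k), hk⟩

end LowerDensity

section SeparatedSets

/-- The ruler sequence `1, 2, 1, 3, 1, 2, 1, 4, …`, which prescribes the radius of the free zone
around the `t`-th point of `rulerPoint`. -/
def ruler (t : ℕ) : ℕ := padicValNat 2 (t + 1) + 1

/-- The partial sums of the ruler sequence. -/
def rulerSum (t : ℕ) : ℕ := ∑ s ∈ Finset.range t, ruler s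

/-- An increasing sequence of integers growing at most linearly whose `s`-th and `t`-th points are
at distance at least `ruler s + ruler t`. -/
def rulerPoint (t : ℕ) : ℕ := rulerSum t + rulerSum (t + 1)

lemma rulerSum_succ (t : ℕ) : rulerSum (t + 1) = rulerSum t + ruler t :=
  Finset.sum_range_succ _ _

lemma rulerSum_mono : Monotone rulerSum :=
  monotone_nat_of_le_succ fun t => (rulerSum_succ t).symm ▸ Nat.le_add_right _ _

lemma rulerSum_eq_add_padicValNat_factorial (t : ℕ) :
    rulerSum t = t + padicValNat 2 t.factorial := by
  induction t with
  | zero => simp [rulerSum]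
  | succ t ih =>
    rw [rulerSum_succ, ih, ruler, Nat.factorial_succ,
      padicValNat.mul t.succ_ne_zero t.factorial_ne_zero]
    ring

lemma rulerSum_le (t : ℕ) : rulerSum t ≤ 2 * t := by
  have := padicValNat_factorial_le 2 t
  rw [rulerSum_eq_add_padicValNat_factorial]
  omega

lemma ruler_le_rulerPoint (t : ℕ) : ruler t ≤ rulerPoint t := by
  rw [rulerPoint, rulerSum_succ]
  omega

lemma rulerPoint_lt (t : ℕ) : rulerPoint t < 4 * (t + 1) := by
  have := rulerSum_le t
  have := rulerSum_le (t + 1)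
  rw [rulerPoint]
  omega

lemma rulerPoint_add_ruler_le {s t : ℕ} (h : s < t) :
    rulerPoint s + (ruler s + ruler t) ≤ rulerPoint t := by
  have hst : rulerSum (s + 1) ≤ rulerSum t := rulerSum_mono h
  have := rulerSum_succ s
  have := rulerSum_succ t
  rw [rulerPoint, rulerPoint]
  omega

lemma ruler_add_ruler_le_abs_sub {s t : ℕ} (h : s ≠ t) :
    (ruler s + ruler t : ℤ) ≤ |(rulerPoint s : ℤ) - rulerPoint t| := by
  rcases h.lt_or_gt with h | h
  · have := rulerPoint_add_ruler_le h
    exact le_abs.2 (.inr (by omega))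
  · have := rulerPoint_add_ruler_le h
    exact le_abs.2 (.inl (by omega))

lemma rulerPoint_injective : Function.Injective rulerPoint :=
  (strictMono_nat_of_lt_succ fun t => by
    have := rulerPoint_add_ruler_le (Nat.lt_add_one t)
    have : 0 < ruler t := Nat.succ_pos _
    omega).injective

lemma ruler_two_pow_mul_odd_sub_one (v q : ℕ) : ruler (2 ^ v * (2 * q + 1) - 1) = v + 1 := by
  rw [ruler, Nat.sub_add_cancel (Nat.mul_pos (by positivity) (by omega)),
    padicValNat.mul (by positivity) (by omega), padicValNat.prime_pow,
    padicValNat.eq_zero_of_not_dvd (by omega), add_zero]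

lemma lowerDensity_rulerPoint_image_pos (v : ℕ) :
    0 < lowerDensity (rulerPoint '' {t | ruler t = v + 1}) := by
  have hpos (q : ℕ) : 0 < 2 ^ v * (2 * q + 1) := by positivity
  refine lowerDensity_pos_of_injective (β := fun q => rulerPoint (2 ^ v * (2 * q + 1) - 1))
    (rulerPoint_injective.comp fun a b hab => ?_)
    (fun q => ⟨_, ruler_two_pow_mul_odd_sub_one v q, rfl⟩) (D := 8 * 2 ^ v) fun q => ?_
  · have hab' : 2 ^ v * (2 * a + 1) = 2 ^ v * (2 * b + 1) :=
      Nat.sub_one_cancel (hpos a) (hpos b) hab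
    have := Nat.eq_of_mul_eq_mul_left (by positivity) hab'
    omega
  · have h := rulerPoint_lt (2 ^ v * (2 * q + 1) - 1)
    rw [Nat.sub_add_cancel (hpos q)] at h
    exact h.trans_le (by nlinarith [Nat.zero_le (2 ^ v)])

theorem exists_separated_sets_lowerDensity_pos (N : ℕ → ℕ) :
    ∃ A : ℕ → Set ℕ, (∀ j, 0 < lowerDensity (A j)) ∧ (∀ j, ∀ n ∈ A j, N j < n) ∧
      ∀ j k, ∀ n ∈ A j, ∀ m ∈ A k, (j, n) ≠ (k, m) → (N j + N k : ℤ) < |(n : ℤ) - m| := by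
  have hN (j : ℕ) : N j ≤ Nat.pair j (N j) := Nat.right_le_pair _ _
  refine ⟨fun j => rulerPoint '' {t | ruler t = Nat.pair j (N j) + 1},
    fun j => lowerDensity_rulerPoint_image_pos _, ?_, ?_⟩
  · rintro j _ ⟨t, ht : ruler t = _, rfl⟩
    have := ruler_le_rulerPoint t
    have := hN j
    omega
  · rintro j k _ ⟨s, hs : ruler s = _, rfl⟩ _ ⟨t, ht : ruler t = _, rfl⟩ hne
    have hst : s ≠ t := by
      rintro rfl
      have hjk : Nat.pair j (N j) = Nat.pair k (N k) := by omega
      exact hne (by rw [(Nat.pair_eq_pair.1 hjk).1])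
    have := ruler_add_ruler_le_abs_sub hst
    have := hN j
    have := hN k
    omega

end SeparatedSets

section SummableOrbits

variable {𝕜 X : Type*} [NontriviallyNormedField 𝕜] [NormedAddCommGroup X] [NormedSpace 𝕜 X]

/-- The vectors lying on a summable orbit `(u n)_{n ∈ ℤ}` of `T`: this packages the hypothesis of
the frequent hypercyclicity criterion that `∑ Tⁿ y` and `∑ Sⁿ y` converge unconditionally, where
`S` is a right inverse of `T` on the vectors considered. -/
def summableOrbitVectors (T : X →L[𝕜] X) : Submodule 𝕜 X where
  carrier := {y | ∃ u : ℤ → X, u 0 = y ∧ (∀ n, T (u n) = u (n + 1)) ∧ Summable u}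
  zero_mem' := ⟨0, rfl, fun _ => map_zero T, summable_zero⟩
  add_mem' := by
    rintro _ _ ⟨u, rfl, hTu, hu⟩ ⟨v, rfl, hTv, hv⟩
    exact ⟨u + v, rfl, fun n => by simp [hTu, hTv], hu.add hv⟩
  smul_mem' := by
    rintro c _ ⟨u, rfl, hTu, hu⟩
    exact ⟨c • u, rfl, fun n => by simp [hTu], hu.const_smul c⟩

lemma mem_summableOrbitVectors {T : X →L[𝕜] X} {u : ℤ → X} (hT : ∀ n, T (u n) = u (n + 1))
    (hu : Summable u) (n : ℤ) : u n ∈ summableOrbitVectors T :=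
  ⟨fun k => u (n + k), congrArg u (add_zero n), fun k => by rw [hT, add_assoc],
    (Equiv.addLeft n).summable_iff.2 hu⟩

lemma pow_apply_orbit {T : X →L[𝕜] X} {u : ℤ → X} (hT : ∀ n, T (u n) = u (n + 1))
    (m : ℕ) (n : ℤ) : (T ^ m) (u n) = u (m + n) := by
  induction m generalizing n with
  | zero => simp
  | succ m ih =>
    rw [pow_succ, mul_apply_eq_comp, hT, ih]
    push_cast
    ring_nf

lemma exists_le_max (M : ℕ → ℕ → ℕ) : ∃ N : ℕ → ℕ, ∀ j k, M j k ≤ max (N j) (N k) := by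
  refine ⟨fun j => (Finset.range (j + 1)).sup fun i => max (M i j) (M j i), fun j k => ?_⟩
  rcases le_total j k with h | h
  · exact le_max_of_le_right ((le_max_left _ _).trans
      (Finset.le_sup (f := fun i => max (M i k) (M k i)) (Finset.mem_range_succ_iff.2 h)))
  · exact le_max_of_le_left ((le_max_right _ _).trans
      (Finset.le_sup (f := fun i => max (M i j) (M j i)) (Finset.mem_range_succ_iff.2 h)))

lemma exists_norm_tsum_le_of_summable {E : Type*} [SeminormedAddCommGroup E] {u : ℤ → E}
    (hu : Summable u) {ε : ℝ} (hε : 0 < ε) :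
    ∃ M : ℕ, ∀ (m : ℤ) (B : Set ℕ), (∀ a ∈ B, (M : ℤ) < |m - a|) →
      ‖∑' a : B, u (m - a)‖ ≤ ε := by
  obtain ⟨s, hs⟩ := hu.tsum_vanishing (Metric.ball_mem_nhds 0 hε)
  refine ⟨s.sup Int.natAbs, fun m B hB => ?_⟩
  have hinj : Set.InjOn (fun a : ℕ => m - a) B := fun a _ b _ hab => by simpa using hab
  rw [← tsum_image u hinj]
  refine (mem_ball_zero_iff.1 (hs _ (Set.disjoint_left.2 ?_))).le
  rintro _ ⟨a, ha, rfl⟩ has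
  have hle : (m - a).natAbs ≤ s.sup Int.natAbs := Finset.le_sup has
  have hlt := hB a ha
  rw [Int.abs_eq_natAbs] at hlt
  omega

lemma exists_uniform_norm_tsum_le {E : Type*} [SeminormedAddCommGroup E] {u : ℕ → ℤ → E}
    (hu : ∀ k, Summable (u k)) :
    ∃ N : ℕ → ℕ, ∀ (j k : ℕ) (m : ℤ) (B : Set ℕ),
      (∀ a ∈ B, (N j : ℤ) < |m - a| ∧ (N k : ℤ) < |m - a|) →
        ‖∑' a : B, u k (m - a)‖ ≤ (1 / 2) ^ j * (1 / 2) ^ k := by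
  have hε (j k : ℕ) : (0 : ℝ) < (1 / 2) ^ j * (1 / 2) ^ k := by positivity
  choose M hM using fun j k => exists_norm_tsum_le_of_summable (hu k) (hε j k)
  obtain ⟨N, hN⟩ := exists_le_max M
  refine ⟨N, fun j k m B hB => hM j k m B fun a ha => ?_⟩
  have hle : (M j k : ℤ) ≤ max (N j : ℤ) (N k) := mod_cast hN j k
  exact hle.trans_lt (max_lt (hB a ha).1 (hB a ha).2)

open Classical in
lemma tsum_subtype_eq_tsum_sdiff_singleton_add_ite {α G : Type*} [AddCommGroup G]
    [UniformSpace G] [IsUniformAddGroup G] [CompleteSpace G] [T2Space G] {f : α → G}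
    (hf : Summable f) (A : Set α) (m : α) :
    ∑' a : A, f a = ∑' a : (A \ {m} : Set α), f a + if m ∈ A then f m else 0 := by
  split_ifs with hm
  · rw [← tsum_singleton m f, ← Summable.tsum_union_disjoint Set.disjoint_sdiff_left
      (hf.subtype _) (hf.subtype _), Set.sdiff_union_of_subset (Set.singleton_subset_iff.2 hm)]
  · rw [Set.sdiff_singleton_eq_self hm, add_zero]

lemma summable_sub_natCast {E : Type*} [NormedAddCommGroup E] [CompleteSpace E] {u : ℤ → E}
    (hu : Summable u) (m : ℤ) : Summable fun a : ℕ => u (m - a) :=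
  hu.comp_injective (i := fun a : ℕ => m - (a : ℤ)) (sub_right_injective.comp Nat.cast_injective)

lemma pow_apply_tsum_orbit [CompleteSpace X] {T : X →L[𝕜] X} {u : ℤ → X}
    (hT : ∀ n, T (u n) = u (n + 1)) (hu : Summable u) (A : Set ℕ) (m : ℕ) :
    (T ^ m) (∑' a : A, u (0 - a)) = ∑' a : A, u (m - a) := by
  have hA : Summable fun a : A => u (0 - (a : ℕ)) := (summable_sub_natCast hu 0).subtype A
  rw [(T ^ m).map_tsum hA]
  exact tsum_congr fun a => by rw [pow_apply_orbit hT, zero_sub, sub_eq_add_neg]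

theorem exists_forall_lowerDensity_norm_pow_apply_sub_le [CompleteSpace X] {T : X →L[𝕜] X}
    {u : ℕ → ℤ → X} (hT : ∀ k n, T (u k n) = u k (n + 1)) (hu : ∀ k, Summable (u k)) :
    ∃ x, ∀ j, 0 < lowerDensity {m | ‖(T ^ m) x - u j 0‖ ≤ 2 * (1 / 2) ^ j} := by
  obtain ⟨N, hN⟩ := exists_uniform_norm_tsum_le hu
  obtain ⟨A, hA, hAmin, hAsep⟩ := exists_separated_sets_lowerDensity_pos N
  let z : ℕ → X := fun k => ∑' a : A k, u k (0 - a)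
  have hz : Summable z := by
    refine .of_norm_bounded summable_geometric_two fun k => ?_
    have hzk := hN k k 0 (A k) fun a ha => by
      have : (N k : ℤ) < |0 - (a : ℤ)| := by simpa using hAmin k a ha
      exact ⟨this, this⟩
    exact hzk.trans (mul_le_of_le_one_left (by positivity)
      (pow_le_one₀ (by norm_num) (by norm_num)))
  refine ⟨∑' k, z k, fun j => lowerDensity_pos_mono (fun m hm => ?_) (hA j)⟩
  let r : ℕ → X := fun k => ∑' a : (A k \ {m} : Set ℕ), u k (m - a)
  have hr (k : ℕ) : ‖r k‖ ≤ (1 / 2) ^ j * (1 / 2) ^ k := by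
    refine hN j k m _ fun a ⟨ha, ham⟩ => ?_
    have := hAsep j k m hm a ha fun h => ham (Prod.ext_iff.1 h).2.symm
    omega
  have hmA (k : ℕ) : m ∈ A k ↔ k = j := by
    refine ⟨fun hmk => ?_, fun h => h ▸ hm⟩
    by_contra hkj
    have := hAsep j k m hm m hmk fun h => hkj (Prod.ext_iff.1 h).1.symm
    rw [sub_self, abs_zero] at this
    omega
  have hsplit (k : ℕ) : (T ^ m) (z k) = r k + if k = j then u j 0 else 0 := by
    rw [pow_apply_tsum_orbit (hT k) (hu k), tsum_subtype_eq_tsum_sdiff_singleton_add_ite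
      (summable_sub_natCast (hu k) m) (A k) m]
    simp only [hmA, sub_self]
    split_ifs with hkj
    · rw [hkj]
    · rfl
  have hbound : HasSum (fun k : ℕ => ((1 / 2) ^ j * (1 / 2) ^ k : ℝ)) (2 * (1 / 2) ^ j) :=
    mul_comm ((1 / 2 : ℝ) ^ j) 2 ▸ hasSum_geometric_two.mul_left _
  have hr_sum : Summable r := .of_norm_bounded hbound.summable hr
  have hTx : (T ^ m) (∑' k, z k) - u j 0 = ∑' k, r k := by
    rw [(T ^ m).map_tsum hz, tsum_congr hsplit,
      hr_sum.tsum_add (hasSum_ite_eq j (u j 0)).summable, tsum_ite_eq, add_sub_cancel_right]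
  rw [Set.mem_ofPred_eq, hTx]
  exact tsum_of_norm_bounded hbound hr

theorem FHC_nonempty_of_dense_summableOrbitVectors [NormedSpace ℂ X] [CompleteSpace X]
    [TopologicalSpace.SeparableSpace X] {T : X →L[ℂ] X}
    (hT : Dense (summableOrbitVectors T : Set X)) : (FHC T).Nonempty := by
  obtain ⟨D, hDT, hDc, hD⟩ :=
    (TopologicalSpace.IsSeparable.of_separableSpace
      (summableOrbitVectors T : Set X)).exists_countable_dense_subset
  have hD : Dense D := dense_closure.1 (hT.mono hD)
  obtain ⟨y, rfl⟩ := hDc.exists_eq_range hD.nonempty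
  choose u hu0 hTu hu using fun i => hDT (Set.mem_range_self i)
  -- Each orbit is repeated infinitely often, so that it is approximated arbitrarily well.
  obtain ⟨x, hx⟩ := exists_forall_lowerDensity_norm_pow_apply_sub_le
    (u := fun j => u (Nat.unpair j).1) (fun _ => hTu _) (fun _ => hu _)
  refine ⟨x, fun U hU hU_ne => ?_⟩
  obtain ⟨_, hyU, i, rfl⟩ := hD.inter_open_nonempty U hU hU_ne
  obtain ⟨ε, hε, hεU⟩ := Metric.isOpen_iff.1 hU (y i) hyU
  obtain ⟨J, hJ⟩ := exists_pow_lt_of_lt_one (half_pos hε) one_half_lt_one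
  refine lowerDensity_pos_mono (fun m hm => hεU ?_) (hx (Nat.pair i J))
  rw [Set.mem_ofPred_eq, Nat.unpair_pair, hu0] at hm
  have hpow : (1 / 2 : ℝ) ^ Nat.pair i J ≤ (1 / 2) ^ J :=
    pow_le_pow_of_le_one (by norm_num) (by norm_num) (Nat.right_le_pair i J)
  rw [mem_ball_iff_norm]
  linarith

end SummableOrbits

section Disjointness

variable {X : Type*} [NormedAddCommGroup X] [NormedSpace ℂ X]

lemma exists_one_lt_pow_lt {L : ℝ} (hL : 1 < L) (C : ℕ) : ∃ r : ℝ, 1 < r ∧ r ^ C < L := by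
  have hlim : Tendsto (fun r : ℝ => r ^ C) (𝓝[>] 1) (𝓝 1) :=
    ((continuous_pow C).tendsto' 1 1 (one_pow C)).mono_left inf_le_left
  obtain ⟨r, hr, hrL⟩ := (eventually_mem_nhdsWithin.and (hlim.eventually_lt_const hL)).exists
  exact ⟨r, hr, hrL⟩

lemma eventually_forall_le_mul_norm_lt_pow {E : Type*} [SeminormedAddCommGroup E] {f : ℕ → E}
    (hf : ∀ r : ℝ, 1 < r → f =O[atTop] fun k => r ^ k) (C : ℕ) {L : ℝ} (hL : 1 < L) :
    ∀ᶠ n : ℕ in atTop, ∀ k ≤ C * n, ‖f k‖ < L ^ n := by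
  obtain ⟨r, hr, hrL⟩ := exists_one_lt_pow_lt hL C
  have hr0 : 0 < r := one_pos.trans hr
  obtain ⟨K, hK, hfK⟩ := Asymptotics.bound_of_isBigO_nat_atTop (hf r hr)
  have hlittle := isLittleO_pow_pow_of_lt_left (pow_nonneg hr0.le C) hrL
  filter_upwards [hlittle.bound (c := 1 / (2 * K)) (by positivity)] with n hn k hk
  rw [Real.norm_of_nonneg (by positivity), Real.norm_of_nonneg (by positivity), one_div_mul_eq_div,
    le_div_iff₀' (by positivity)] at hn
  have hLn : 0 < L ^ n := by positivity
  calc ‖f k‖ ≤ K * ‖r ^ k‖ := hfK (pow_pos hr0 k).ne'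
    _ = K * r ^ k := by rw [Real.norm_of_nonneg (by positivity)]
    _ ≤ K * (r ^ C) ^ n := by
      rw [← pow_mul]
      gcongr
      exact hr.le
    _ < L ^ n := by linarith

theorem FHC_inter_FHC_smul_eq_empty {T : X →L[ℂ] X} {φ : X →L[ℂ] ℂ} (hφ : φ ≠ 0)
    (hgrowth : ∀ r : ℝ, 1 < r → (fun k => φ ∘L T ^ k) =O[atTop] fun k => r ^ k)
    {l : ℂ} (hl : 1 < ‖l‖) : FHC T ∩ FHC (l • T) = ∅ := by
  rw [Set.eq_empty_iff_forall_notMem]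
  rintro x ⟨hx, hxl⟩
  obtain ⟨y, hy⟩ : ∃ y, φ y = 2 :=
    φ.toLinearMap.surjective (fun h => hφ (ContinuousLinearMap.coe_injective h)) 2
  have hlarge := hx {z | 1 < ‖φ z‖} (isOpen_lt continuous_const φ.continuous.norm)
    ⟨y, by simp [hy]⟩
  have hsmall := hxl (Metric.ball 0 1) Metric.isOpen_ball ⟨0, Metric.mem_ball_self one_pos⟩
  obtain ⟨C, hC⟩ := exists_forall_eventually_exists_mem_of_lowerDensity_pos hlarge
  obtain ⟨n, hn, ⟨k, hk, hnk⟩, hφT⟩ := ((frequently_mem_of_lowerDensity_pos hsmall).and_eventually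
    (hC.and (eventually_forall_le_mul_norm_lt_pow hgrowth C hl))).exists
  have hn' : ‖l‖ ^ n * ‖(T ^ n) x‖ < 1 := by
    rwa [Set.mem_ofPred_eq, mem_ball_zero_iff, smul_pow, _root_.smul_apply, norm_smul,
      norm_pow] at hn
  have hcontra : 1 < ‖l‖ ^ n * ‖(T ^ n) x‖ :=
    calc 1 < ‖φ ((T ^ (n + k)) x)‖ := hnk
      _ = ‖(φ ∘L T ^ k) ((T ^ n) x)‖ := by
        rw [add_comm, pow_add, mul_apply_eq_comp, ContinuousLinearMap.comp_apply]
      _ ≤ ‖φ ∘L T ^ k‖ * ‖(T ^ n) x‖ := ContinuousLinearMap.le_opNorm _ _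
      _ ≤ ‖l‖ ^ n * ‖(T ^ n) x‖ := by gcongr; exact (hφT k hk).le
  exact hcontra.not_gt hn'

end Disjointness

section WeightedShift

/-- `B` is the weighted backward shift with weights `w 1, w 2, …` on `ℓ^p`; the value `w 0` is
irrelevant. -/
def IsWeightedShift {p : ℝ≥0∞} [Fact (1 ≤ p)] (w : ℕ → ℂ)
    (B : lp (fun _ : ℕ => ℂ) p →L[ℂ] lp (fun _ : ℕ => ℂ) p) : Prop :=
  ∀ (x : lp (fun _ : ℕ => ℂ) p) (n : ℕ), (B x) n = w (n + 1) * x (n + 1)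

/-- The product `w 1 * ⋯ * w n` of the first `n` weights. -/
def weightProd (w : ℕ → ℂ) (n : ℕ) : ℂ := ∏ i ∈ Finset.range n, w (i + 1)

variable {p : ℝ≥0∞} {w : ℕ → ℂ}

lemma weightProd_succ (w : ℕ → ℂ) (n : ℕ) : weightProd w (n + 1) = weightProd w n * w (n + 1) :=
  Finset.prod_range_succ _ n

lemma weightProd_ne_zero (hw : ∀ n, w (n + 1) ≠ 0) (n : ℕ) : weightProd w n ≠ 0 :=
  Finset.prod_ne_zero_iff.2 fun i _ => hw i

lemma weightProd_smul (l : ℂ) (w : ℕ → ℂ) (n : ℕ) :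
    weightProd (l • w) n = l ^ n * weightProd w n := by
  simp [weightProd, Finset.prod_mul_distrib]

lemma memℓp_inv_weightProd_smul (hw : Memℓp (weightProd w)⁻¹ p) {l : ℂ} (hl : 1 ≤ ‖l‖) :
    Memℓp (weightProd (l • w))⁻¹ p := by
  refine hw.mono' fun n => ?_
  rw [Pi.inv_apply, Pi.inv_apply, weightProd_smul, mul_inv, norm_mul, norm_inv, norm_pow]
  exact mul_le_of_le_one_left (norm_nonneg _) (inv_le_one_of_one_le₀ (one_le_pow₀ hl))

variable (p w) in
/-- The bilateral orbit of the weighted shift through the first basis vector `e₀`: it is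
`(w 1 ⋯ w k)⁻¹ e_k` at time `-k`, and vanishes at positive times. -/
noncomputable def singleOrbit : ℤ → lp (fun _ : ℕ => ℂ) p :=
  Function.extend (fun k : ℕ => -(k : ℤ)) (fun k => lp.single p k (weightProd w k)⁻¹) 0

lemma neg_natCast_injective : Function.Injective fun k : ℕ => -(k : ℤ) :=
  neg_injective.comp Nat.cast_injective

lemma singleOrbit_neg (k : ℕ) : singleOrbit p w (-k) = lp.single p k (weightProd w k)⁻¹ :=
  neg_natCast_injective.extend_apply _ _ k

lemma singleOrbit_of_pos {n : ℤ} (hn : 0 < n) : singleOrbit p w n = 0 :=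
  Function.extend_apply' _ _ _ (by grind)

variable [Fact (1 ≤ p)]

lemma dense_span_range_lp_single {ι 𝕜 : Type*} [DecidableEq ι] [NormedField 𝕜] (hp : p ≠ ⊤) :
    Dense (Submodule.span 𝕜 (Set.range (lp.single (E := fun _ : ι => 𝕜) p · 1)) :
      Set (lp (fun _ : ι => 𝕜) p)) := by
  intro x
  refine mem_closure_of_tendsto (lp.hasSum_single hp x) (Eventually.of_forall fun s => ?_)
  refine Submodule.sum_mem _ fun n _ => ?_
  rw [← mul_one (x n), ← smul_eq_mul, lp.single_smul]
  exact Submodule.smul_mem _ _ (Submodule.subset_span (Set.mem_range_self n))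

lemma lp_separableSpace {ι 𝕜 : Type*} [Countable ι] [NormedField 𝕜]
    [TopologicalSpace.SeparableSpace 𝕜] (hp : p ≠ ⊤) :
    TopologicalSpace.SeparableSpace (lp (fun _ : ι => 𝕜) p) := by
  classical
  rw [← TopologicalSpace.isSeparable_univ_iff, ← (dense_span_range_lp_single hp).closure_eq]
  exact (Set.countable_range _).isSeparable.span.closure

lemma summable_singleOrbit (hp : p ≠ ⊤) (hw : Memℓp (weightProd w)⁻¹ p) :
    Summable (singleOrbit p w) :=
  (summable_extend_zero neg_natCast_injective).2 (lp.hasSum_single hp ⟨_, hw⟩).summable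

namespace IsWeightedShift

variable {B : lp (fun _ : ℕ => ℂ) p →L[ℂ] lp (fun _ : ℕ => ℂ) p}

lemma smul (hB : IsWeightedShift w B) (l : ℂ) : IsWeightedShift (l • w) (l • B) := fun x n => by
  rw [_root_.smul_apply, lp.coeFn_smul, Pi.smul_apply, hB, Pi.smul_apply, smul_mul_assoc]

lemma apply_single_zero (hB : IsWeightedShift w B) (c : ℂ) : B (lp.single p 0 c) = 0 := by
  ext n
  simp [hB _ n, lp.single_apply]

lemma apply_single_succ (hB : IsWeightedShift w B) (n : ℕ) (c : ℂ) :
    B (lp.single p (n + 1) c) = lp.single p n (w (n + 1) * c) := by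
  ext m
  rw [hB, lp.single_apply, lp.single_apply]
  rcases eq_or_ne m n with rfl | h
  · simp
  · simp [h]

lemma pow_apply_zero (hB : IsWeightedShift w B) (n : ℕ) (x : lp (fun _ : ℕ => ℂ) p) :
    ((B ^ n) x) 0 = weightProd w n * x n := by
  induction n generalizing x with
  | zero => simp [weightProd]
  | succ n ih => rw [pow_succ, mul_apply_eq_comp, ih, hB, weightProd_succ, mul_assoc]

lemma apply_singleOrbit (hB : IsWeightedShift w B) (hw0 : ∀ n, w (n + 1) ≠ 0) (n : ℤ) :
    B (singleOrbit p w n) = singleOrbit p w (n + 1) := by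
  rcases lt_or_ge 0 n with hn | hn
  · rw [singleOrbit_of_pos hn, singleOrbit_of_pos (by omega), map_zero]
  obtain ⟨k, rfl⟩ := Int.exists_eq_neg_ofNat hn
  cases k with
  | zero => rw [singleOrbit_neg, hB.apply_single_zero, singleOrbit_of_pos (by omega)]
  | succ k =>
    rw [singleOrbit_neg, hB.apply_single_succ, weightProd_succ, mul_inv_rev,
      mul_inv_cancel_left₀ (hw0 k), Nat.cast_succ, neg_add, neg_add_cancel_right, singleOrbit_neg]

lemma lp_single_mem_summableOrbitVectors (hB : IsWeightedShift w B) (hp : p ≠ ⊤)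
    (hw0 : ∀ n, w (n + 1) ≠ 0) (hw : Memℓp (weightProd w)⁻¹ p) (n : ℕ) :
    lp.single p n 1 ∈ summableOrbitVectors B := by
  have hmem := (summableOrbitVectors B).smul_mem (weightProd w n)
    (mem_summableOrbitVectors (hB.apply_singleOrbit hw0) (summable_singleOrbit hp hw) (-n))
  rwa [singleOrbit_neg, ← lp.single_smul, smul_eq_mul,
    mul_inv_cancel₀ (weightProd_ne_zero hw0 n)] at hmem

theorem FHC_nonempty (hB : IsWeightedShift w B) (hp : p ≠ ⊤) (hw0 : ∀ n, w (n + 1) ≠ 0)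
    (hw : Memℓp (weightProd w)⁻¹ p) : (FHC B).Nonempty := by
  have := lp_separableSpace (ι := ℕ) (𝕜 := ℂ) hp
  refine FHC_nonempty_of_dense_summableOrbitVectors
    ((dense_span_range_lp_single hp).mono (Submodule.span_le.2 ?_))
  rintro _ ⟨n, rfl⟩
  exact hB.lp_single_mem_summableOrbitVectors hp hw0 hw n

theorem FHC_inter_FHC_smul_eq_empty (hB : IsWeightedShift w B)
    (hw : ∀ r : ℝ, 1 < r → weightProd w =O[atTop] fun n => r ^ n) {l : ℂ} (hl : 1 < ‖l‖) :
    FHC B ∩ FHC (l • B) = ∅ := by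
  let φ := lp.evalCLM ℂ (fun _ : ℕ => ℂ) p 0
  have hφ : φ ≠ 0 := fun h => one_ne_zero (α := ℂ) <| by
    simpa [φ, lp.evalCLM] using DFunLike.congr_fun h (lp.single p 0 (1 : ℂ))
  suffices hle : ∀ n, ‖φ ∘L B ^ n‖ ≤ ‖weightProd w n‖ from
    _root_.FHC_inter_FHC_smul_eq_empty hφ
      (fun r hr => (Asymptotics.IsBigO.of_norm_le hle).trans (hw r hr).norm_left) hl
  intro n
  refine ContinuousLinearMap.opNorm_le_bound _ (norm_nonneg _) fun x => ?_
  have hx : (φ ∘L B ^ n) x = weightProd w n * x n := hB.pow_apply_zero n x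
  rw [hx, norm_mul]
  gcongr
  exact lp.norm_apply_le_norm (zero_lt_one.trans_le Fact.out).ne' x n

end IsWeightedShift

end WeightedShift

theorem stmt13_general {p : ℝ≥0∞} [Fact (1 ≤ p)] (hp : p ≠ ⊤) {w : ℕ → ℂ}
    {B : lp (fun _ : ℕ => ℂ) p →L[ℂ] lp (fun _ : ℕ => ℂ) p} (hB : IsWeightedShift w B)
    (hw0 : ∀ n, w (n + 1) ≠ 0) (hw : Memℓp (weightProd w)⁻¹ p)
    (hgrowth : ∀ r : ℝ, 1 < r → weightProd w =O[atTop] fun n => r ^ n) :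
    (FHC B).Nonempty ∧
      ∀ l : ℂ, 1 < ‖l‖ → (FHC (l • B)).Nonempty ∧ FHC B ∩ FHC (l • B) = ∅ := by
  refine ⟨hB.FHC_nonempty hp hw0 hw, fun l hl => ⟨?_, hB.FHC_inter_FHC_smul_eq_empty hgrowth hl⟩⟩
  have hl0 : l ≠ 0 := norm_pos_iff.1 (one_pos.trans hl)
  exact (hB.smul l).FHC_nonempty hp (fun n => smul_ne_zero hl0 (hw0 n))
    (memℓp_inv_weightProd_smul hw hl.le)

section SquareWeights

variable {w : ℕ → ℂ}

lemma weightProd_eq_sq (hw : ∀ n : ℕ, 1 ≤ n → w n = (((n : ℂ) + 1) / (n : ℂ)) ^ 2) (n : ℕ) :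
    weightProd w n = ((n : ℂ) + 1) ^ 2 := by
  induction n with
  | zero => simp [weightProd]
  | succ n ih =>
    have : (n : ℂ) + 1 ≠ 0 := n.cast_add_one_ne_zero
    rw [weightProd_succ, ih, hw _ n.succ_pos, Nat.cast_succ, ← mul_pow, mul_div_cancel₀ _ this]

lemma norm_natCast_add_one_sq (n : ℕ) : ‖((n : ℂ) + 1) ^ 2‖ = ((n + 1 : ℕ) : ℝ) ^ 2 := by
  rw [norm_pow, ← Nat.cast_add_one, Complex.norm_natCast]

lemma memℓp_inv_natCast_add_one_sq {p : ℝ≥0∞} (hp : 1 ≤ p) :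
    Memℓp (fun n : ℕ => (((n : ℂ) + 1) ^ 2)⁻¹) p := by
  refine Memℓp.of_exponent_ge (q := 1) (memℓp_gen ?_) hp
  simp only [norm_inv, norm_natCast_add_one_sq, ENNReal.toReal_one, Real.rpow_one]
  exact (summable_nat_add_iff 1).2 (Real.summable_nat_pow_inv.2 one_lt_two)

lemma natCast_add_one_sq_isBigO_pow {r : ℝ} (hr : 1 < r) :
    (fun n : ℕ => ((n : ℂ) + 1) ^ 2) =O[atTop] fun n => r ^ n := by
  have hlittle := (isLittleO_pow_const_const_pow_of_one_lt (R := ℝ) 2 hr).comp_tendsto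
    (tendsto_add_atTop_nat 1)
  have hshift : (fun n : ℕ => r ^ (n + 1)) =O[atTop] fun n => r ^ n := by
    simpa only [pow_succ'] using
      Asymptotics.isBigO_const_mul_self r (fun n : ℕ => r ^ n) atTop
  refine .trans (.of_norm_le fun n => ?_) (hlittle.isBigO.trans hshift)
  exact (norm_natCast_add_one_sq n).le

end SquareWeights

/-- Corollary 2.27: for the weight `w_n = ((n+1)/n)²`, the weighted backward shift
`B_w` on `ℓ^p(ℕ)` (encoded as a bounded operator `B` with
`(B x) n = w (n+1) * x (n+1)`) is frequently hypercyclic, each multiple `λB_w`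
with `λ > 1` is frequently hypercyclic, but `FHC(B_w) ∩ FHC(λB_w) = ∅`. In particular
there exist two frequently hypercyclic weighted shifts on `ℓ^p(ℕ)` with no common
frequently hypercyclic vector. -/
theorem stmt13 (p : ℝ≥0∞) [Fact (1 ≤ p)] (hp : p ≠ ⊤)
    (w : ℕ → ℂ) (hw : ∀ n : ℕ, 1 ≤ n → w n = (((n : ℂ) + 1) / (n : ℂ)) ^ 2)
    (B : lp (fun _ : ℕ => ℂ) p →L[ℂ] lp (fun _ : ℕ => ℂ) p)
    (hB : ∀ x : lp (fun _ : ℕ => ℂ) p, ∀ n : ℕ, (B x) n = w (n + 1) * x (n + 1)) :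
    (FHC B).Nonempty ∧
      ∀ l : ℝ, 1 < l →
        (FHC ((l : ℂ) • B)).Nonempty ∧ FHC B ∩ FHC ((l : ℂ) • B) = ∅ := by
  have hprod : weightProd w = fun n : ℕ => ((n : ℂ) + 1) ^ 2 := funext (weightProd_eq_sq hw)
  have hw0 (n : ℕ) : w (n + 1) ≠ 0 := by
    rw [hw _ n.succ_pos]
    exact pow_ne_zero 2 (div_ne_zero (Nat.cast_add_one_ne_zero _) (mod_cast n.succ_ne_zero))
  refine (stmt13_general hp hB hw0 ?_ ?_).imp_right fun h l hl => h l ?_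
  · rw [hprod]
    exact memℓp_inv_natCast_add_one_sq Fact.out
  · rw [hprod]
    exact fun r hr => natCast_add_one_sq_isBigO_pow hr
  · rwa [Complex.norm_real, Real.norm_of_nonneg (one_pos.trans hl).le]
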